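/- Suppose the network has connectivity at least μ̃ with μ̃ > 3/4, and θ is a stable equilibrium. Then ρ₁² ≥ 1/8, where ρ₁ = (1/n)·∑_j cos(θ_j). -/

import Mathlib

/-!
Testing stability against the cosines and the sines of the phases gives
`∑ A j k (cos (θ k - θ j) - cos² (θ k - θ j)) ≥ 0`. For the complete network this sum is
`card² (‖ρ₁‖² - (1 + ‖ρ₂‖²) / 2)`, where `ρ₁`, `ρ₂` are the first two order parameters. A missing
edge with phase difference `x` changes it by `cos² x - cos x ≤ 2 - sin² x`. By the equilibrium
equations the sines over the missing edges at `j` have the same sum as over all edges at `j`, so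
Cauchy–Schwarz makes the `sin²` terms large wherever `θ j` is not aligned with `±ρ₁`; on average
this misalignment is at least `(1 - ‖ρ₂‖) / 2`. With fewer than a quarter of the edges missing at
each `j`, this leaves an inequality quadratic in `‖ρ₂‖` which forces `‖ρ₁‖² ≥ 2 μ - 1`.
-/

section OrderParameter

open Complex ComplexConjugate

variable {ι : Type*} [Fintype ι]

/-- The Kuramoto order parameter `ρ₁ = (1/n) ∑ exp (i θ j)` of a phase vector. The second order
parameter `ρ₂` is that of the doubled phases `fun j => 2 * θ j`. -/
noncomputable def orderParameter (θ : ι → ℝ) : ℂ :=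
  (∑ j, exp (θ j * I)) / Fintype.card ι

theorem card_mul_orderParameter (θ : ι → ℝ) :
    Fintype.card ι * orderParameter θ = ∑ j, exp (θ j * I) := by
  rcases isEmpty_or_nonempty ι with _ | _
  · simp
  · exact mul_div_cancel₀ _ (by simp)

theorem norm_orderParameter_le_one (θ : ι → ℝ) : ‖orderParameter θ‖ ≤ 1 := by
  rw [orderParameter, norm_div, norm_natCast]
  refine div_le_one_of_le₀ ((norm_sum_le _ _).trans ?_) (Nat.cast_nonneg _)
  simp [norm_exp_ofReal_mul_I]

theorem orderParameter_eq_of_sum_sin_eq_zero {θ : ι → ℝ} (hsin : ∑ j, Real.sin (θ j) = 0) :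
    orderParameter θ = ((1 / (Fintype.card ι : ℝ) * ∑ j, Real.cos (θ j) : ℝ) : ℂ) := by
  have hsum : ∑ j, exp (θ j * I) = ((∑ j, Real.cos (θ j) : ℝ) : ℂ) := by
    apply Complex.ext <;> simp only [re_sum, im_sum, exp_ofReal_mul_I_re, exp_ofReal_mul_I_im,
      ofReal_re, ofReal_im, hsin]
  rw [orderParameter, hsum]
  push_cast
  ring

theorem exp_ofReal_sub_mul_I (x y : ℝ) :
    exp ((x - y : ℝ) * I) = exp (x * I) * conj (exp (y * I)) := by
  rw [← exp_conj, ← exp_add]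
  simp only [ofReal_sub, map_mul, conj_ofReal, conj_I]
  ring_nf

theorem sum_exp_ofReal_sub_mul_I (θ : ι → ℝ) (φ : ℝ) :
    ∑ k, exp ((θ k - φ : ℝ) * I) =
      Fintype.card ι * (orderParameter θ * conj (exp (φ * I))) := by
  simp only [exp_ofReal_sub_mul_I, ← Finset.sum_mul, ← card_mul_orderParameter, mul_assoc]

theorem sum_sin_sub (θ : ι → ℝ) (φ : ℝ) :
    ∑ k, Real.sin (θ k - φ) =
      Fintype.card ι * (orderParameter θ * conj (exp (φ * I))).im := by
  simpa only [im_sum, exp_ofReal_mul_I_im, ← ofReal_natCast, im_ofReal_mul] using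
    congrArg im (sum_exp_ofReal_sub_mul_I θ φ)

theorem sum_sum_cos_sub (θ : ι → ℝ) :
    ∑ j, ∑ k, Real.cos (θ k - θ j) = (Fintype.card ι : ℝ) ^ 2 * ‖orderParameter θ‖ ^ 2 := by
  have hexp : ∑ j, ∑ k, exp ((θ k - θ j : ℝ) * I) =
      (((Fintype.card ι : ℝ) ^ 2 * ‖orderParameter θ‖ ^ 2 : ℝ) : ℂ) := by
    simp only [sum_exp_ofReal_sub_mul_I, ← Finset.mul_sum, ← map_sum, ← card_mul_orderParameter]
    push_cast
    rw [← mul_conj', map_mul, map_natCast]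
    ring
  simpa only [re_sum, exp_ofReal_mul_I_re, ofReal_re] using congrArg re hexp

theorem sum_sum_cos_sub_sq (θ : ι → ℝ) :
    ∑ j, ∑ k, Real.cos (θ k - θ j) ^ 2 =
      (Fintype.card ι : ℝ) ^ 2 * (1 + ‖orderParameter fun j => 2 * θ j‖ ^ 2) / 2 := by
  have hdouble := sum_sum_cos_sub fun j => 2 * θ j
  simp only [← mul_sub] at hdouble
  simp only [Real.cos_sq, Finset.sum_add_distrib, ← Finset.sum_div, hdouble, Finset.sum_const,
    Finset.card_univ, nsmul_eq_mul]
  ring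

theorem im_sq_eq_norm_sq_sub_re_sq (z : ℂ) : z.im ^ 2 = (‖z‖ ^ 2 - (z ^ 2).re) / 2 := by
  rw [Complex.sq_norm, normSq_apply, sq z, mul_re]
  ring

theorem le_sum_im_mul_conj_exp_sq (θ : ι → ℝ) (w : ℂ) :
    Fintype.card ι * (‖w‖ ^ 2 * (1 - ‖orderParameter fun j => 2 * θ j‖)) / 2 ≤
      ∑ j, (w * conj (exp (θ j * I))).im ^ 2 := by
  set ρ₂ := orderParameter fun j => 2 * θ j with hρ₂
  have hsq : ∑ j, (w * conj (exp (θ j * I))) ^ 2 = Fintype.card ι * (w ^ 2 * conj ρ₂) := by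
    have hexp : ∀ j, exp (θ j * I) ^ 2 = exp ((2 * θ j : ℝ) * I) := fun j => by
      rw [← exp_nat_mul]
      push_cast
      ring_nf
    simp only [mul_pow, ← map_pow, hexp, ← Finset.mul_sum, ← map_sum, ← card_mul_orderParameter,
      map_mul, map_natCast, ← hρ₂]
    ring
  have hre : ∑ j, ((w * conj (exp (θ j * I))) ^ 2).re ≤ Fintype.card ι * (‖w‖ ^ 2 * ‖ρ₂‖) := by
    rw [← re_sum, hsq]
    refine (re_le_norm _).trans_eq ?_
    simp
  have hsum : ∑ j, (w * conj (exp (θ j * I))).im ^ 2 =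
      (Fintype.card ι * ‖w‖ ^ 2 - ∑ j, ((w * conj (exp (θ j * I))) ^ 2).re) / 2 := by
    simp only [im_sq_eq_norm_sq_sub_re_sq, norm_mul, RCLike.norm_conj, norm_exp_ofReal_mul_I,
      mul_one, ← Finset.sum_div, Finset.sum_sub_distrib, Finset.sum_const, Finset.card_univ,
      nsmul_eq_mul]
  rw [hsum]
  linarith

theorem le_sum_sum_sin_sub_sq (θ : ι → ℝ) :
    (Fintype.card ι : ℝ) ^ 3 *
        (‖orderParameter θ‖ ^ 2 * (1 - ‖orderParameter fun j => 2 * θ j‖)) / 2 ≤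
      ∑ j, (∑ k, Real.sin (θ k - θ j)) ^ 2 := by
  have h := mul_le_mul_of_nonneg_left (le_sum_im_mul_conj_exp_sq θ (orderParameter θ))
    (sq_nonneg (Fintype.card ι : ℝ))
  simp only [sum_sin_sub, mul_pow, ← Finset.mul_sum]
  linarith

end OrderParameter

section Network

variable {ι : Type*} [Fintype ι]

theorem sum_mul_cos_sub_cos_sq_nonneg_of_stable {A : ι → ι → ℝ} {θ : ι → ℝ}
    (hstab : ∀ v : ι → ℝ, 0 ≤ ∑ j, ∑ k, A j k * Real.cos (θ k - θ j) * (v j - v k) ^ 2) :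
    0 ≤ ∑ j, ∑ k, A j k * (Real.cos (θ k - θ j) - Real.cos (θ k - θ j) ^ 2) := by
  have hchord (x y : ℝ) : (Real.cos x - Real.cos y) ^ 2 + (Real.sin x - Real.sin y) ^ 2 =
      2 - 2 * Real.cos (y - x) := by
    rw [Real.cos_sub]
    linear_combination Real.sin_sq_add_cos_sq x + Real.sin_sq_add_cos_sq y
  have hterm (j k : ι) :
      A j k * Real.cos (θ k - θ j) * (Real.cos (θ j) - Real.cos (θ k)) ^ 2 +
          A j k * Real.cos (θ k - θ j) * (Real.sin (θ j) - Real.sin (θ k)) ^ 2 =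
        2 * (A j k * (Real.cos (θ k - θ j) - Real.cos (θ k - θ j) ^ 2)) := by
    rw [← mul_add, hchord]
    ring
  have htest := add_nonneg (hstab fun j => Real.cos (θ j)) (hstab fun j => Real.sin (θ j))
  simp only [← Finset.sum_add_distrib, hterm, ← Finset.mul_sum] at htest
  linarith

theorem sum_mul_cos_sq_sub_cos_le {b : ι → ℝ} {c : ℝ} (x : ι → ℝ) (hb : ∀ k, 0 ≤ b k)
    (hbc : ∑ k, b k ≤ c) :
    ∑ k, b k * (Real.cos (x k) ^ 2 - Real.cos (x k)) ≤
      2 * ∑ k, b k - (∑ k, b k * Real.sin (x k)) ^ 2 / c := by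
  have hsinsq_nonneg : 0 ≤ ∑ k, b k * Real.sin (x k) ^ 2 :=
    Finset.sum_nonneg fun k _ => mul_nonneg (hb k) (sq_nonneg _)
  have hcauchy : (∑ k, b k * Real.sin (x k)) ^ 2 / c ≤ ∑ k, b k * Real.sin (x k) ^ 2 := by
    refine div_le_of_le_mul₀ ((Finset.sum_nonneg fun k _ => hb k).trans hbc) hsinsq_nonneg ?_
    calc (∑ k, b k * Real.sin (x k)) ^ 2
        ≤ (∑ k, b k * Real.sin (x k) ^ 2) * ∑ k, b k :=
          Finset.sum_sq_le_sum_mul_sum_of_sq_le_mul _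
            (fun k _ => mul_nonneg (hb k) (sq_nonneg _)) (fun k _ => hb k)
            fun k _ => le_of_eq (by ring)
      _ ≤ (∑ k, b k * Real.sin (x k) ^ 2) * c := mul_le_mul_of_nonneg_left hbc hsinsq_nonneg
  have hterm (k : ι) : b k * (Real.cos (x k) ^ 2 - Real.cos (x k)) ≤
      2 * b k - b k * Real.sin (x k) ^ 2 := by
    have hpoint : Real.cos (x k) ^ 2 - Real.cos (x k) ≤ 2 - Real.sin (x k) ^ 2 := by
      linarith [Real.sin_sq_add_cos_sq (x k), Real.neg_one_le_cos (x k)]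
    linarith [mul_le_mul_of_nonneg_left hpoint (hb k)]
  calc ∑ k, b k * (Real.cos (x k) ^ 2 - Real.cos (x k))
      ≤ ∑ k, (2 * b k - b k * Real.sin (x k) ^ 2) := Finset.sum_le_sum fun k _ => hterm k
    _ = 2 * ∑ k, b k - ∑ k, b k * Real.sin (x k) ^ 2 := by
      rw [Finset.sum_sub_distrib, Finset.mul_sum]
    _ ≤ _ := by linarith

theorem sum_compl_mul_cos_sq_sub_cos_le {a x : ι → ℝ} {μ : ℝ} (hμ : 3 / 4 ≤ μ)
    (ha : ∀ k, a k ≤ 1) (hconn : μ * Fintype.card ι ≤ ∑ k, a k)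
    (heq : ∑ k, a k * Real.sin (x k) = 0) :
    ∑ k, (1 - a k) * (Real.cos (x k) ^ 2 - Real.cos (x k)) ≤
      2 * ((1 - μ) * Fintype.card ι) - 4 * (∑ k, Real.sin (x k)) ^ 2 / Fintype.card ι := by
  have hcompl : ∑ k, (1 - a k) ≤ (1 - μ) * Fintype.card ι := by
    simp only [Finset.sum_sub_distrib, Finset.sum_const, Finset.card_univ, nsmul_eq_mul]
    linarith
  have hquarter : (1 - μ) * Fintype.card ι ≤ Fintype.card ι / 4 := by
    rw [div_eq_inv_mul]
    gcongr
    linarith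
  have hsin : ∑ k, (1 - a k) * Real.sin (x k) = ∑ k, Real.sin (x k) := by
    simp only [sub_mul, one_mul, Finset.sum_sub_distrib, heq, sub_zero]
  have hrow := sum_mul_cos_sq_sub_cos_le x (fun k => sub_nonneg.2 (ha k)) (hcompl.trans hquarter)
  rw [hsin, div_div_eq_mul_div, mul_comm _ (4 : ℝ)] at hrow
  linarith

theorem sum_sum_compl_mul_cos_sq_sub_cos_le {A : ι → ι → ℝ} {θ : ι → ℝ} {μ : ℝ} (hμ : 3 / 4 ≤ μ)
    (hA : ∀ j k, A j k ≤ 1) (hconn : ∀ j, μ * Fintype.card ι ≤ ∑ k, A j k)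
    (heq : ∀ j, ∑ k, A j k * Real.sin (θ k - θ j) = 0) :
    ∑ j, ∑ k, (1 - A j k) * (Real.cos (θ k - θ j) ^ 2 - Real.cos (θ k - θ j)) ≤
      (Fintype.card ι : ℝ) ^ 2 * (2 * (1 - μ) -
        2 * ‖orderParameter θ‖ ^ 2 * (1 - ‖orderParameter fun j => 2 * θ j‖)) := by
  set N : ℝ := (Fintype.card ι : ℝ)
  set R := ‖orderParameter θ‖
  set r := ‖orderParameter fun j => 2 * θ j‖
  calc ∑ j, ∑ k, (1 - A j k) * (Real.cos (θ k - θ j) ^ 2 - Real.cos (θ k - θ j))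
      ≤ ∑ j, (2 * ((1 - μ) * N) - 4 * (∑ k, Real.sin (θ k - θ j)) ^ 2 / N) :=
        Finset.sum_le_sum fun j _ => sum_compl_mul_cos_sq_sub_cos_le hμ (hA j) (hconn j) (heq j)
    _ = N * (2 * ((1 - μ) * N)) - 4 * (∑ j, (∑ k, Real.sin (θ k - θ j)) ^ 2) / N := by
        rw [Finset.sum_sub_distrib, Finset.sum_const, Finset.card_univ, nsmul_eq_mul,
          ← Finset.sum_div, ← Finset.mul_sum]
    _ ≤ N * (2 * ((1 - μ) * N)) - 4 * (N ^ 3 * (R ^ 2 * (1 - r)) / 2) / N := by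
        gcongr
        exact le_sum_sum_sin_sub_sq θ
    _ = N ^ 2 * (2 * (1 - μ) - 2 * R ^ 2 * (1 - r)) := by
        rcases eq_or_ne N 0 with hN0 | hN0
        · simp [hN0]
        · field_simp
          ring

theorem orderParameter_quadratic_nonneg_of_stable [Nonempty ι] {A : ι → ι → ℝ} {θ : ι → ℝ} {μ : ℝ}
    (hμ : 3 / 4 ≤ μ) (hA : ∀ j k, A j k ≤ 1) (hconn : ∀ j, μ * Fintype.card ι ≤ ∑ k, A j k)
    (heq : ∀ j, ∑ k, A j k * Real.sin (θ k - θ j) = 0)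
    (hstab : ∀ v : ι → ℝ, 0 ≤ ∑ j, ∑ k, A j k * Real.cos (θ k - θ j) * (v j - v k) ^ 2) :
    0 ≤ ‖orderParameter θ‖ ^ 2 - (1 + ‖orderParameter fun j => 2 * θ j‖ ^ 2) / 2 +
      2 * (1 - μ) - 2 * ‖orderParameter θ‖ ^ 2 * (1 - ‖orderParameter fun j => 2 * θ j‖) := by
  have hcard : (0 : ℝ) < Fintype.card ι := Nat.cast_pos.2 Fintype.card_pos
  have hsplit : ∑ j, ∑ k, A j k * (Real.cos (θ k - θ j) - Real.cos (θ k - θ j) ^ 2) =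
      ∑ j, ∑ k, Real.cos (θ k - θ j) - ∑ j, ∑ k, Real.cos (θ k - θ j) ^ 2 +
        ∑ j, ∑ k, (1 - A j k) * (Real.cos (θ k - θ j) ^ 2 - Real.cos (θ k - θ j)) := by
    simp only [← Finset.sum_add_distrib, ← Finset.sum_sub_distrib]
    exact Finset.sum_congr rfl fun j _ => Finset.sum_congr rfl fun k _ => by ring
  have hmissing := sum_sum_compl_mul_cos_sq_sub_cos_le hμ hA hconn heq
  have hstable := sum_mul_cos_sub_cos_sq_nonneg_of_stable hstab
  rw [hsplit, sum_sum_cos_sub, sum_sum_cos_sub_sq] at hstable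
  refine nonneg_of_mul_nonneg_right ?_ (pow_pos hcard 2)
  linarith

theorem two_mul_sub_one_le_of_quadratic_nonneg {μ r x : ℝ} (hμ : 3 / 4 < μ) (hr : r ≤ 1)
    (hx : 0 ≤ x) (h : 0 ≤ x - (1 + r ^ 2) / 2 + 2 * (1 - μ) - 2 * x * (1 - r)) :
    2 * μ - 1 ≤ x := by
  have hr_half : 0 < 2 * r - 1 := by
    refine pos_of_mul_pos_right (a := x) ?_ hx
    linarith [sq_nonneg r]
  have hprod : 0 ≤ (x - (2 * μ - 1)) * (2 * r - 1) :=
    calc 0 ≤ (1 - r) * (4 * μ - 3 + (1 - r) / 2) :=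
          mul_nonneg (by linarith) (by linarith)
      _ ≤ (x - (2 * μ - 1)) * (2 * r - 1) := by linarith
  linarith [nonneg_of_mul_nonneg_left hprod hr_half]

theorem stable_equilibrium_rho1_sq_ge_eighth_general [Nonempty ι] {A : ι → ι → ℝ} {θ : ι → ℝ}
    {μ : ℝ} (hμ : 3 / 4 < μ) (hA : ∀ j k, A j k ≤ 1)
    (hconn : ∀ j, μ * Fintype.card ι ≤ ∑ k, A j k)
    (heq : ∀ j, ∑ k, A j k * Real.sin (θ k - θ j) = 0)
    (hstab : ∀ v : ι → ℝ, 0 ≤ ∑ j, ∑ k, A j k * Real.cos (θ k - θ j) * (v j - v k) ^ 2) :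
    2 * μ - 1 ≤ ‖orderParameter θ‖ ^ 2 :=
  two_mul_sub_one_le_of_quadratic_nonneg hμ (norm_orderParameter_le_one _) (sq_nonneg _)
    (orderParameter_quadratic_nonneg_of_stable hμ.le hA hconn heq hstab)

end Network

/-- If the network has connectivity at least `μ̃ > 3/4` and `θ` is a stable equilibrium, then
`ρ₁² ≥ 1/8`. -/
theorem stable_equilibrium_rho1_sq_ge_eighth
    (n : ℕ) (hn : 1 ≤ n) (A : Fin n → Fin n → ℝ) (θ : Fin n → ℝ) (μ : ℝ)
    (hμ0 : 3 / 4 < μ) (hμ1 : μ ≤ 1)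
    (hsym : ∀ j k, A j k = A k j)
    (h01 : ∀ j k, A j k = 0 ∨ A j k = 1)
    (hdiag : ∀ j, A j j = 1)
    (hconn : ∀ j, μ * n ≤ ∑ k : Fin n, A j k)
    (heq : ∀ j, ∑ k : Fin n, A j k * Real.sin (θ k - θ j) = 0)
    (hstab : ∀ v : Fin n → ℝ,
      0 ≤ ∑ j : Fin n, ∑ k : Fin n,
            A j k * Real.cos (θ k - θ j) * (v j - v k) ^ 2)
    (hsin0 : ∑ j : Fin n, Real.sin (θ j) = 0)
    (ρ₁ : ℝ) (hρ₁ : ρ₁ = (1 / (n : ℝ)) * ∑ j : Fin n, Real.cos (θ j))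
    (hρ₁nonneg : 0 ≤ ρ₁) :
    ρ₁ ^ 2 ≥ 1 / 8 := by
  have : Nonempty (Fin n) := ⟨⟨0, hn⟩⟩
  have hA (j k : Fin n) : A j k ≤ 1 := by rcases h01 j k with h | h <;> simp [h]
  have hbound :=
    stable_equilibrium_rho1_sq_ge_eighth_general hμ0 hA (by simpa using hconn) heq hstab
  rw [orderParameter_eq_of_sum_sin_eq_zero hsin0, Fintype.card_fin, ← hρ₁, Complex.norm_real,
    Real.norm_eq_abs, sq_abs] at hbound
  linarith
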